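/- Let 𝒱 be the ℚ-vector space of functions from the set of lines to ℚ, for each triangle T let χ_T ∈ 𝒱 be its indicator function, and let 𝒱_tet ⊆ 𝒱 be the span of the 45 vectors χ_T. Then the subspace {v ∈ 𝒱_tet : Σ_L v(L) = 0} (the intersection of 𝒱_tet with the kernel of the coordinate-sum linear functional) has dimension exactly 20. -/

import Mathlib

/-- The symmetric bilinear form of signature (1,6) on the lattice `Fin 7 → ℤ`,
modelling the Picard lattice of a smooth cubic surface. -/
def B (x y : Fin 7 → ℤ) : ℤ :=
  x 0 * y 0 - x 1 * y 1 - x 2 * y 2 - x 3 * y 3 - x 4 * y 4 - x 5 * y 5 - x 6 * y 6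

/-- The canonical class `K = (-3,1,1,1,1,1,1)`. -/
def K : Fin 7 → ℤ := ![-3, 1, 1, 1, 1, 1, 1]

/-- A line is a vector `L` with `⟨L,L⟩ = -1` and `⟨L,K⟩ = -1`. -/
def IsLine (L : Fin 7 → ℤ) : Prop := B L L = -1 ∧ B L K = -1

/-- A triangle is a 3-element set of (pairwise distinct) lines summing to `-K`. -/
def IsTriangle (T : Finset (Fin 7 → ℤ)) : Prop :=
  T.card = 3 ∧ (∀ L ∈ T, IsLine L) ∧ ∑ L ∈ T, L = -K

/-- The ℚ-vector space of functions from the set of lines to ℚ. -/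
abbrev Vq : Type := {L : Fin 7 → ℤ // IsLine L} → ℚ

/-- The indicator function of a triangle: value 1 at each of its lines, 0 elsewhere. -/
def chi (T : Finset (Fin 7 → ℤ)) : Vq :=
  fun L => if (L : Fin 7 → ℤ) ∈ T then 1 else 0

/-- The span of the 45 indicator vectors of triangles. -/
def Vtet : Submodule ℚ Vq := Submodule.span ℚ (chi '' {T | IsTriangle T})

/-! The classes of the `27` lines span the rational Picard space, of dimension `7`, so the linear
relations among them have dimension `27 - 7 = 20`. These relations are the elements of `Vtet` with
coordinate sum `0`: a triangle has class `-K` and coordinate sum `3`, so an element of `Vtet` with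
coordinate sum `0` has class `0`; conversely, summing the triangles through a line `L` gives
`∑_{T ∋ L} χ_T = 6 δ_L + ⟨L, ·⟩`, and weighting this identity by a relation `v` and summing over `L`
kills the pairing and exhibits `6 v` as a combination of triangles.

The identity holds because two distinct lines have intersection number `0` or `1` by the Hodge index
theorem, two lines `L`, `M` with `⟨L, M⟩ = 1` lie in the triangle completed by `-K - L - M`, and `L`
meets ten other lines, the sum of all the lines being `-9K`. -/

open Finset

/-! ### The intersection form -/

theorem B_eq_sub_sum (x y : Fin 7 → ℤ) :
    B x y = x 0 * y 0 - ∑ i : Fin 6, x i.succ * y i.succ := by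
  simp only [B, Fin.sum_univ_six, Fin.reduceSucc]
  ring

theorem B_K_right (x : Fin 7 → ℤ) : B x K = -(3 * x 0 + ∑ i : Fin 6, x i.succ) := by
  have hK : ∀ i : Fin 6, K i.succ = 1 := by decide
  simp only [B_eq_sub_sum, hK, mul_one, show K 0 = -3 from rfl]
  ring

theorem B_comm (x y : Fin 7 → ℤ) : B x y = B y x := by
  simp only [B, mul_comm]

theorem B_add_left (x y z : Fin 7 → ℤ) : B (x + y) z = B x z + B y z := by
  simp only [B, Pi.add_apply]
  ring

theorem B_sub_left (x y z : Fin 7 → ℤ) : B (x - y) z = B x z - B y z := by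
  simp only [B, Pi.sub_apply]
  ring

theorem B_neg_left (x z : Fin 7 → ℤ) : B (-x) z = -B x z := by
  simp only [B, Pi.neg_apply]
  ring

theorem B_smul_left (c : ℤ) (x y : Fin 7 → ℤ) : B (c • x) y = c * B x y := by
  simp only [B, Pi.smul_apply, smul_eq_mul]
  ring

theorem B_sum_left {ι : Type*} (s : Finset ι) (x : ι → Fin 7 → ℤ) (y : Fin 7 → ℤ) :
    B (∑ i ∈ s, x i) y = ∑ i ∈ s, B (x i) y := by
  simp only [B, Finset.sum_apply, sum_mul, sum_sub_distrib]

theorem B_K_K : B K K = 3 := by decide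

theorem sq_sum_succ_le (x : Fin 7 → ℤ) :
    (∑ i : Fin 6, x i.succ) ^ 2 ≤ 6 * ∑ i : Fin 6, x i.succ * x i.succ := by
  simpa [sq] using sq_sum_le_card_mul_sum_sq (s := univ) (f := fun i : Fin 6 => x i.succ)

/-- The Hodge index inequality `D² K² ≤ (D · K)²`, with `K² = 3`. -/
theorem three_mul_B_self_le (x : Fin 7 → ℤ) : 3 * B x x ≤ B x K ^ 2 := by
  rw [B_K_right, B_eq_sub_sum]
  nlinarith [sq_sum_succ_le x, sq_nonneg (2 * x 0 + ∑ i : Fin 6, x i.succ)]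

theorem eq_zero_of_B_self_nonneg {x : Fin 7 → ℤ} (hK : B x K = 0) (hx : 0 ≤ B x x) : x = 0 := by
  have hcs := sq_sum_succ_le x
  rw [B_K_right] at hK
  rw [B_eq_sub_sum] at hx
  have hsum : ∑ i : Fin 6, x i.succ = -3 * x 0 := by linarith
  rw [hsum] at hcs
  have h0 : x 0 = 0 := by nlinarith
  have hsq : ∑ i : Fin 6, x i.succ * x i.succ = 0 :=
    le_antisymm (by nlinarith) (sum_nonneg fun i _ => mul_self_nonneg _)
  rw [sum_eq_zero_iff_of_nonneg fun i _ => mul_self_nonneg _] at hsq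
  exact funext (Fin.cases h0 fun i => mul_self_eq_zero.mp (hsq i (mem_univ i)))

namespace IsLine

variable {L M : Fin 7 → ℤ}

theorem B_le_one (hL : IsLine L) (hM : IsLine M) : B L M ≤ 1 := by
  have h := three_mul_B_self_le (L + M)
  simp only [B_add_left, B_comm _ (L + M), hL.1, hL.2, hM.1, hM.2, B_comm M L] at h
  linarith

theorem B_nonneg (hL : IsLine L) (hM : IsLine M) (hne : L ≠ M) : 0 ≤ B L M := by
  by_contra! hneg
  refine hne (sub_eq_zero.mp (eq_zero_of_B_self_nonneg ?_ ?_))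
  · rw [B_sub_left, hL.2, hM.2, sub_self]
  · simp only [B_sub_left, B_comm _ (L - M), hL.1, hM.1, B_comm M L]
    linarith

theorem B_eq_ite_sub_ite (hL : IsLine L) (hM : IsLine M) :
    B L M = (if B L M = 1 then 1 else 0) - (if L = M then 1 else 0) := by
  by_cases hLM : L = M
  · simp [← hLM, hL.1]
  · have hle := hL.B_le_one hM
    have hnonneg := hL.B_nonneg hM hLM
    split_ifs <;> omega

end IsLine

/-! ### Classification of the lines -/

theorem exists_eq_ite_of_sum_mul_self_eq {ι : Type*} [Fintype ι] [DecidableEq ι] {b : ι → ℤ}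
    {ε : ℤ} (hε : ε * ε = 1) (h : ∑ i, b i * b i = ε * ∑ i, b i) :
    ∃ S : Finset ι, ∀ i, b i = if i ∈ S then ε else 0 := by
  have hnonneg : ∀ i ∈ univ, 0 ≤ b i * b i - ε * b i := fun i _ => by
    linear_combination Int.le_self_sq (ε * b i) + b i * b i * hε
  have hzero : ∑ i, (b i * b i - ε * b i) = 0 := by
    rw [sum_sub_distrib, ← mul_sum, h, sub_self]
  refine ⟨univ.filter (b · ≠ 0), fun i => ?_⟩
  have hi := (sum_eq_zero_iff_of_nonneg hnonneg).mp hzero i (mem_univ i)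
  by_cases hb : b i = 0
  · simp [hb]
  · simpa [hb] using mul_right_cancel₀ hb (sub_eq_zero.mp hi)

/-- The class of degree `a` with coordinate `ε` along the exceptional curves indexed by `S` and `0`
along the others; every line has this form with `ε = 1` or `ε = -1`. -/
def subsetClass (a ε : ℤ) (S : Finset (Fin 6)) : Fin 7 → ℤ :=
  Fin.cons a fun i => if i ∈ S then ε else 0

/-- The 27 lines on the blow-up of the plane in six points: the exceptional curves, the lines
through two of the points and the conics through five of them. -/
def lines : Finset (Fin 7 → ℤ) :=
  (powersetCard 1 univ).image (subsetClass 0 1) ∪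
    (powersetCard 2 univ).image (subsetClass 1 (-1)) ∪
    (powersetCard 5 univ).image (subsetClass 2 (-1))

theorem card_lines : #lines = 27 := by decide +kernel

theorem sum_lines : ∑ L ∈ lines, L = -9 • K := by decide +kernel

theorem IsLine.sum_succ {L : Fin 7 → ℤ} (hL : IsLine L) :
    ∑ i : Fin 6, L i.succ = 1 - 3 * L 0 := by
  have hK := hL.2
  rw [B_K_right] at hK
  linarith

theorem IsLine.sum_succ_mul_self {L : Fin 7 → ℤ} (hL : IsLine L) :
    ∑ i : Fin 6, L i.succ * L i.succ = L 0 * L 0 + 1 := by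
  have hself := hL.1
  rw [B_eq_sub_sum] at hself
  linarith

theorem IsLine.apply_zero_mem_Icc {L : Fin 7 → ℤ} (hL : IsLine L) : L 0 ∈ Icc 0 2 := by
  have hcs := sq_sum_succ_le L
  rw [hL.sum_succ, hL.sum_succ_mul_self] at hcs
  rw [mem_Icc]
  constructor <;> nlinarith

/-- The hypothesis `h` says that the coordinates `bᵢ` along the exceptional curves satisfy
`∑ bᵢ² = ε ∑ bᵢ`. -/
theorem IsLine.exists_eq_subsetClass {L : Fin 7 → ℤ} (hL : IsLine L) {ε : ℤ} (hε : ε * ε = 1)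
    (h : L 0 * L 0 + 1 = ε * (1 - 3 * L 0)) :
    ∃ S : Finset (Fin 6), L = subsetClass (L 0) ε S ∧ ε * #S = 1 - 3 * L 0 := by
  obtain ⟨S, hS⟩ := exists_eq_ite_of_sum_mul_self_eq hε
    (b := fun i : Fin 6 => L i.succ) (by rw [hL.sum_succ, hL.sum_succ_mul_self, h])
  refine ⟨S, funext (Fin.cases rfl hS), ?_⟩
  rw [← hL.sum_succ, sum_congr rfl fun i _ => hS i]
  simp [mul_comm]

theorem IsLine.mem_lines {L : Fin 7 → ℤ} (hL : IsLine L) : L ∈ lines := by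
  have hdeg := mem_Icc.mp hL.apply_zero_mem_Icc
  simp only [lines, mem_union, mem_image, mem_powersetCard_univ]
  obtain h | h | h : L 0 = 0 ∨ L 0 = 1 ∨ L 0 = 2 := by omega
  · obtain ⟨S, hS, hcard⟩ := hL.exists_eq_subsetClass (ε := 1) rfl (by rw [h]; rfl)
    rw [h] at hS hcard
    exact .inl (.inl ⟨S, by omega, hS.symm⟩)
  · obtain ⟨S, hS, hcard⟩ := hL.exists_eq_subsetClass (ε := -1) rfl (by rw [h]; rfl)
    rw [h] at hS hcard
    exact .inl (.inr ⟨S, by omega, hS.symm⟩)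
  · obtain ⟨S, hS, hcard⟩ := hL.exists_eq_subsetClass (ε := -1) rfl (by rw [h]; rfl)
    rw [h] at hS hcard
    exact .inr ⟨S, by omega, hS.symm⟩

theorem mem_lines_iff {L : Fin 7 → ℤ} : L ∈ lines ↔ IsLine L := by
  have h : ∀ L ∈ lines, B L L = -1 ∧ B L K = -1 := by decide +kernel
  exact ⟨h L, IsLine.mem_lines⟩

instance : Fintype {L : Fin 7 → ℤ // IsLine L} :=
  Fintype.subtype lines fun _ => mem_lines_iff

theorem sum_subtype_isLine {A : Type*} [AddCommMonoid A] (f : (Fin 7 → ℤ) → A) :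
    ∑ L : {L : Fin 7 → ℤ // IsLine L}, f L = ∑ L ∈ lines, f L :=
  (sum_subtype lines (fun _ => mem_lines_iff) f).symm

/-! ### Triangles through a line -/

/-- The lines meeting a line `L` in a point; `L` itself is left out, as `⟨L, L⟩ = -1`. -/
def meeting (L : Fin 7 → ℤ) : Finset (Fin 7 → ℤ) := {M ∈ lines | B L M = 1}

theorem mem_meeting {L M : Fin 7 → ℤ} : M ∈ meeting L ↔ IsLine M ∧ B L M = 1 := by
  rw [meeting, mem_filter, mem_lines_iff]

theorem IsLine.card_meeting {L : Fin 7 → ℤ} (hL : IsLine L) : #(meeting L) = 10 := by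
  have hcount : ∑ M ∈ lines, B M L = #(meeting L) - 1 := by
    rw [sum_congr rfl fun M hM => (B_comm M L).trans (hL.B_eq_ite_sub_ite (mem_lines_iff.mp hM)),
      sum_sub_distrib, sum_boole, sum_ite_eq, if_pos hL.mem_lines, meeting]
  have htotal : ∑ M ∈ lines, B M L = 9 := by
    rw [← B_sum_left, sum_lines, B_smul_left, B_comm, hL.2]
    norm_num
  omega

/-- The third side of the triangle spanned by two meeting lines `L` and `M`. -/
def residualLine (L M : Fin 7 → ℤ) : Fin 7 → ℤ := -K - L - M

theorem residualLine_residualLine (L M : Fin 7 → ℤ) : residualLine L (residualLine L M) = M :=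
  sub_sub_cancel _ _

theorem B_residualLine_left (L M x : Fin 7 → ℤ) :
    B (residualLine L M) x = -B x K - B x L - B x M := by
  rw [residualLine, B_sub_left, B_sub_left, B_neg_left, B_comm K, B_comm L, B_comm M]

theorem IsLine.residualLine_mem_meeting {L M : Fin 7 → ℤ} (hL : IsLine L) (hM : M ∈ meeting L) :
    residualLine L M ∈ meeting L := by
  obtain ⟨hM, hLM⟩ := mem_meeting.mp hM
  refine mem_meeting.mpr ⟨⟨?_, ?_⟩, ?_⟩ <;>
    simp [B_comm _ (residualLine L M), B_residualLine_left, hL.1, hL.2, hM.1, hM.2, hLM,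
      B_comm K, B_comm M L, B_K_K]

theorem IsLine.sum_meeting_residualLine {L : Fin 7 → ℤ} (hL : IsLine L) {A : Type*}
    [AddCommMonoid A] (f : (Fin 7 → ℤ) → A) :
    ∑ M ∈ meeting L, f (residualLine L M) = ∑ M ∈ meeting L, f M :=
  sum_nbij' (residualLine L) (residualLine L) (fun _ => hL.residualLine_mem_meeting)
    (fun _ => hL.residualLine_mem_meeting) (fun M _ => residualLine_residualLine L M)
    (fun M _ => residualLine_residualLine L M) fun _ _ => rfl

theorem IsLine.ne_of_mem_meeting {L M : Fin 7 → ℤ} (hL : IsLine L) (hM : M ∈ meeting L) :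
    L ≠ M := by
  rintro rfl
  exact absurd (hL.1.symm.trans (mem_meeting.mp hM).2) (by decide)

theorem IsLine.ne_residualLine {L M : Fin 7 → ℤ} (hL : IsLine L) (hM : M ∈ meeting L) :
    M ≠ residualLine L M := by
  obtain ⟨hline, hLM⟩ := mem_meeting.mp hM
  refine hline.ne_of_mem_meeting (mem_meeting.mpr
    ⟨(mem_meeting.mp (hL.residualLine_mem_meeting hM)).1, ?_⟩)
  simp [B_comm M (residualLine L M), B_residualLine_left, hline.1, hline.2, B_comm M L, hLM]

theorem IsLine.isTriangle_residualLine {L M : Fin 7 → ℤ} (hL : IsLine L) (hM : M ∈ meeting L) :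
    IsTriangle {L, M, residualLine L M} := by
  have hR := hL.residualLine_mem_meeting hM
  have hLM := hL.ne_of_mem_meeting hM
  have hLR := hL.ne_of_mem_meeting hR
  have hMR := hL.ne_residualLine hM
  refine ⟨card_eq_three.mpr ⟨_, _, _, hLM, hLR, hMR, rfl⟩, ?_, ?_⟩
  · simp only [mem_insert, mem_singleton, forall_eq_or_imp, forall_eq]
    exact ⟨hL, (mem_meeting.mp hM).1, (mem_meeting.mp hR).1⟩
  · rw [sum_insert (by simp [hLM, hLR]), sum_pair hMR, residualLine]
    abel

theorem chi_triple_apply {L M R : Fin 7 → ℤ} (hLM : L ≠ M) (hLR : L ≠ R) (hMR : M ≠ R)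
    (N : {L : Fin 7 → ℤ // IsLine L}) :
    chi {L, M, R} N =
      (if L = N then 1 else 0) + (if M = N then 1 else 0) + (if R = N then 1 else 0) := by
  simp only [chi, mem_insert, mem_singleton]
  grind

/-- Each triangle through `L` occurs twice in the sum, once for each of its other two sides. -/
theorem IsLine.sum_chi_meeting_apply {L : Fin 7 → ℤ} (hL : IsLine L)
    (N : {L : Fin 7 → ℤ // IsLine L}) :
    ∑ M ∈ meeting L, chi {L, M, residualLine L M} N =
      2 * ((if L = N then 6 else 0) + (B L N : ℚ)) := by
  have hmem : (N : Fin 7 → ℤ) ∈ meeting L ↔ B L N = 1 := by simp [mem_meeting, N.2]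
  rw [sum_congr rfl fun M hM => chi_triple_apply (hL.ne_of_mem_meeting hM)
      (hL.ne_of_mem_meeting (hL.residualLine_mem_meeting hM)) (hL.ne_residualLine hM) N,
    sum_add_distrib, sum_add_distrib,
    hL.sum_meeting_residualLine fun M => if M = N then (1 : ℚ) else 0,
    sum_const, hL.card_meeting, sum_ite_eq', hL.B_eq_ite_sub_ite N.2]
  simp only [hmem]
  push_cast
  split_ifs <;> norm_num

theorem IsLine.ite_add_B_mem_Vtet {L : Fin 7 → ℤ} (hL : IsLine L) :
    (fun N => (if L = N then 6 else 0) + (B L N : ℚ) : Vq) ∈ Vtet := by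
  have hsum : ∑ M ∈ meeting L, chi {L, M, residualLine L M} ∈ Vtet := sum_mem fun M hM =>
    Submodule.subset_span ⟨_, hL.isTriangle_residualLine hM, rfl⟩
  convert Vtet.smul_mem (1 / 2) hsum using 1
  funext N
  rw [Pi.smul_apply, Finset.sum_apply, hL.sum_chi_meeting_apply, smul_eq_mul]
  ring

/-! ### The class map -/

/-- The embedding of the lattice in the rational Picard space. -/
def toRat : (Fin 7 → ℤ) →+ (Fin 7 → ℚ) := (Int.castAddHom ℚ).compLeft (Fin 7)

theorem toRat_apply (x : Fin 7 → ℤ) (k : Fin 7) : toRat x k = x k := rfl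

/-- The map sending a rational combination of lines to its class in the rational Picard space; its
kernel is the space of linear relations among the lines. -/
def classMap : Vq →ₗ[ℚ] (Fin 7 → ℚ) := Fintype.linearCombination ℚ fun L => toRat L

theorem classMap_eq_sum (v : Vq) : classMap v = ∑ L, v L • toRat L :=
  Fintype.linearCombination_apply ℚ _ v

theorem sum_mul_B_eq_zero {v : Vq} (hv : classMap v = 0) (y : Fin 7 → ℤ) :
    ∑ L, v L * (B L y : ℚ) = 0 := by
  have hcoord (k : Fin 7) : ∑ L, v L * (L.1 k : ℚ) = 0 := by
    simpa [classMap_eq_sum, toRat_apply] using congrFun hv k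
  calc ∑ L, v L * (B L y : ℚ)
      = (∑ L, v L * (L.1 0 : ℚ)) * y 0
          - ∑ i : Fin 6, (∑ L, v L * (L.1 i.succ : ℚ)) * y i.succ := by
        simp only [B_eq_sub_sum, Int.cast_sub, Int.cast_sum, Int.cast_mul, mul_sub, mul_sum,
          sum_sub_distrib, sum_mul, mul_assoc]
        rw [sum_comm]
    _ = 0 := by simp only [hcoord, zero_mul, sum_const_zero, sub_zero]

theorem sum_eq_zero_of_classMap_eq_zero {v : Vq} (hv : classMap v = 0) : ∑ L, v L = 0 := by
  have h := sum_mul_B_eq_zero hv K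
  rw [sum_congr rfl fun L _ => by rw [L.2.2]] at h
  simpa using h

theorem mem_Vtet_of_classMap_eq_zero {v : Vq} (hv : classMap v = 0) : v ∈ Vtet := by
  have hsum : ∑ L, v L • (fun N => (if L = N.1 then 6 else 0) + (B L N : ℚ) : Vq) ∈ Vtet :=
    sum_mem fun L _ => Vtet.smul_mem _ L.2.ite_add_B_mem_Vtet
  convert Vtet.smul_mem (1 / 6) hsum using 1
  funext N
  simp only [Finset.sum_apply, Pi.smul_apply, smul_eq_mul, mul_add, sum_add_distrib,
    sum_mul_B_eq_zero hv, Subtype.val_inj, mul_ite, mul_zero, sum_ite_eq', mem_univ, if_true]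
  ring

theorem sum_chi_smul {A : Type*} [AddCommGroup A] [Module ℚ A] {T : Finset (Fin 7 → ℤ)}
    (hT : ∀ L ∈ T, IsLine L) (f : (Fin 7 → ℤ) → A) :
    ∑ L : {L : Fin 7 → ℤ // IsLine L}, chi T L • f L = ∑ L ∈ T, f L := by
  have hsub : T ⊆ lines := fun L h => (hT L h).mem_lines
  simp only [chi, ite_smul, one_smul, zero_smul]
  rw [sum_subtype_isLine fun L => if L ∈ T then f L else 0, sum_ite_mem,
    inter_eq_right.mpr hsub]

theorem three_smul_classMap_of_mem_Vtet {v : Vq} (hv : v ∈ Vtet) :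
    (3 : ℚ) • classMap v = -(∑ L, v L) • toRat K := by
  induction hv using Submodule.span_induction with
  | mem x hx =>
    obtain ⟨T, ⟨hcard, hT, hsum⟩, rfl⟩ := hx
    have hdeg : ∑ L, chi T L = 3 := by simpa [hcard] using sum_chi_smul hT fun _ => (1 : ℚ)
    rw [classMap_eq_sum, sum_chi_smul hT, ← map_sum, hsum, hdeg, map_neg, smul_neg, neg_smul]
  | zero => simp
  | add x y _ _ hx hy =>
    simp only [map_add, smul_add, hx, hy, Pi.add_apply, sum_add_distrib, neg_add, add_smul]
  | smul c x _ hx =>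
    simp only [map_smul, smul_comm _ c, hx, Pi.smul_apply, ← smul_sum, ← smul_neg, smul_assoc]

theorem mem_Vtet_and_sum_eq_zero_iff {v : Vq} :
    v ∈ Vtet ∧ ∑ L, v L = 0 ↔ classMap v = 0 := by
  refine ⟨fun ⟨hv, hsum⟩ => ?_, fun hv =>
    ⟨mem_Vtet_of_classMap_eq_zero hv, sum_eq_zero_of_classMap_eq_zero hv⟩⟩
  simpa [hsum] using three_smul_classMap_of_mem_Vtet hv

theorem toRat_single (k : Fin 7) : toRat (Pi.single k 1) = Pi.single k 1 := by
  funext j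
  simp [toRat_apply, Pi.single_apply]

theorem range_classMap : LinearMap.range classMap = ⊤ := by
  have hline {L : Fin 7 → ℤ} (hL : L ∈ lines) : toRat L ∈ LinearMap.range classMap := by
    rw [classMap, Fintype.range_linearCombination]
    exact Submodule.subset_span ⟨⟨L, mem_lines_iff.mp hL⟩, rfl⟩
  have hexc : ∀ i : Fin 6, Pi.single i.succ 1 ∈ lines := by decide +kernel
  have hsec : Pi.single 0 1 - Pi.single 1 1 - Pi.single 2 1 ∈ lines := by decide +kernel
  rw [eq_top_iff, ← (Pi.basisFun ℚ (Fin 7)).span_eq, Submodule.span_le, Set.range_subset_iff]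
  intro k
  rw [Pi.basisFun_apply, ← toRat_single]
  refine Fin.cases ?_ (fun i => hline (hexc i)) k
  have hsum := add_mem (add_mem (hline hsec) (hline (hexc 1))) (hline (hexc 0))
  rwa [← map_add, ← map_add, Fin.succ_zero_eq_one, Fin.succ_one_eq_two, sub_add_cancel,
    sub_add_cancel] at hsum

theorem finrank_ker_classMap : Module.finrank ℚ (LinearMap.ker classMap) = 20 := by
  have h := LinearMap.finrank_range_add_finrank_ker classMap
  rw [range_classMap, finrank_top, Module.finrank_fintype_fun_eq_card,
    Module.finrank_fintype_fun_eq_card, Fintype.card_of_subtype lines fun _ => mem_lines_iff,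
    card_lines, Fintype.card_fin] at h
  omega

/-- The intersection of `Vtet` with the kernel of the coordinate-sum functional is a
subspace of dimension exactly 20. -/
theorem tetragonal_relations_dim_20 :
    ∃ U : Submodule ℚ Vq,
      (U : Set Vq) = {v : Vq | v ∈ Vtet ∧ ∑ᶠ L : {L : Fin 7 → ℤ // IsLine L}, v L = 0} ∧
      Module.finrank ℚ ↥U = 20 := by
  refine ⟨LinearMap.ker classMap, Set.ext fun v => ?_, finrank_ker_classMap⟩
  rw [Set.mem_ofPred_eq, finsum_eq_sum_of_fintype]
  exact mem_Vtet_and_sum_eq_zero_iff.symm
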